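/- arXiv:1501.01769 — 2 statements merged into one kernel-verified Lean document; each statement's English description precedes it below -/
import Mathlib

section
/- Let F_q be a finite field of odd characteristic. For any polynomial F ∈ F_q[x] of positive degree, μ(F) = (-1)^{deg F} · χ₂(disc(F)), where μ is the Möbius function of F_q[x], disc(F) is the discriminant of F, and χ₂ is the quadratic character of F_q (with χ₂(0) = 0). (Pellet's formula.) -/
/-!
Both sides are compared through the factorization of `F` into irreducibles.

If `F` is not squarefree it is not separable, since finite fields are perfect, so
`Res(F, F') = 0` and both sides vanish.

For `f` irreducible of degree `n`, the roots of `f` in `L = F_q[x]/(f)` are the Frobenius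
conjugates `α, α^q, …, α^(q^(n-1))` of the class `α` of `x`. Let `Δ ∈ L` be the Vandermonde
determinant of these roots, times `lc(f)^(n-1)`. Then `disc f = Δ²`
(`algebraMap_polyDisc_eq_sq`), and Frobenius permutes the roots by an `n`-cycle, so
`Δ^q = (-1)^(n-1) Δ`. Euler's criterion yields
`χ₂(disc f) = (Δ²)^((q-1)/2) = Δ^(q-1) = (-1)^(n-1)`
(`quadraticChar_polyDisc_of_irreducible`), which is the claim for `f`.

The identity `disc(FG) = disc(F) disc(G) Res(F, G)²` (`polyDisc_mul`), with `Res(F, G) ≠ 0` for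
coprime `F` and `G`, makes `χ₂ ∘ disc` multiplicative on coprime polynomials of positive degree,
and an induction on the degree finishes the squarefree case.
-/


open Polynomial
open scoped Classical

/-- The Möbius function of `F_q[x]`: `(-1)^r` if `F` is a unit times a product of
`r` distinct monic irreducible polynomials, and `0` otherwise. -/
noncomputable def polyMoebius {Fq : Type*} [Field Fq] (f : Polynomial Fq) : ℤ :=
  if Squarefree f then (-1) ^ Multiset.card (UniqueFactorizationMonoid.factors f) else 0

/-- The Sylvester matrix of two polynomials `f, g` with formal degrees `a, b`:
the first `b` rows carry the coefficients of `f`, the remaining `a` rows those of `g`. -/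
noncomputable def sylvesterMatrix {Fq : Type*} [Field Fq] (f g : Polynomial Fq) (a b : ℕ) :
    Matrix (Fin (a + b)) (Fin (a + b)) Fq :=
  Matrix.of fun i j =>
    if (i : ℕ) < b then (if (j : ℕ) ≤ a + i then f.coeff (a + i - j) else 0)
    else (if (j : ℕ) ≤ b + ((i : ℕ) - b) then g.coeff (b + ((i : ℕ) - b) - j) else 0)

/-- The discriminant of a polynomial `F` of degree `n`:
`disc F = (-1)^{n(n-1)/2} Res(F, F') / lc(F)`, where the resultant is the
determinant of the Sylvester matrix of `F` and its derivative. -/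
noncomputable def polyDisc {Fq : Type*} [Field Fq] (F : Polynomial Fq) : Fq :=
  (-1) ^ (F.natDegree * (F.natDegree - 1) / 2) *
    (sylvesterMatrix F F.derivative F.natDegree (F.natDegree - 1)).det / F.leadingCoeff

/-- The row convention with descending coefficients used here and Mathlib's column convention with
ascending coefficients differ by a transposition and a reversal of both index sets, so the
determinants agree without any sign. -/
theorem sylvesterMatrix_eq {K : Type*} [Field K] (f g : K[X]) (a b : ℕ)
    (hf : f.natDegree ≤ a) (hg : g.natDegree ≤ b) :
    sylvesterMatrix f g a b =
      (sylvester f g a b).transpose.submatrix Fin.revPerm Fin.revPerm := by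
  ext i j
  obtain ⟨i, hi⟩ := i
  obtain ⟨j, hj⟩ := j
  simp only [sylvesterMatrix, sylvester, Matrix.of_apply, Matrix.submatrix_apply,
    Matrix.transpose_apply, Fin.revPerm_apply]
  by_cases hib : i < b
  · have : Fin.rev (⟨i, hi⟩ : Fin (a + b)) = Fin.natAdd a ⟨b - 1 - i, by omega⟩ := by
      ext; simp [Fin.val_rev]; omega
    rw [this, Fin.addCases_right]
    simp only [hib, Fin.val_rev, Set.mem_Icc, if_true]
    split_ifs with h1 h2 h2
    · congr 1; omega
    · exact coeff_eq_zero_of_natDegree_lt (by omega)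
    · omega
    · rfl
  · have : Fin.rev (⟨i, hi⟩ : Fin (a + b)) = Fin.castAdd b ⟨a + b - 1 - i, by omega⟩ := by
      ext; simp [Fin.val_rev]; omega
    rw [this, Fin.addCases_left]
    simp only [hib, Fin.val_rev, Set.mem_Icc, if_false]
    split_ifs with h1 h2 h2
    · congr 1; omega
    · exact coeff_eq_zero_of_natDegree_lt (by omega)
    · omega
    · rfl

theorem polyDisc_eq {K : Type*} [Field K] (F : K[X]) :
    polyDisc F = (-1) ^ (F.natDegree * (F.natDegree - 1) / 2) *
      resultant F (derivative F) F.natDegree (F.natDegree - 1) / F.leadingCoeff := by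
  rw [polyDisc, sylvesterMatrix_eq _ _ _ _ le_rfl (natDegree_derivative_le F),
    Matrix.det_submatrix_equiv_self, Matrix.det_transpose, resultant]

/-- Multiplicativity of the resultant in its second argument for formal degrees `m`, `n` that may
exceed the true ones. This slack is needed because `deg f'` can drop below `deg f - 1` in
positive characteristic. -/
theorem resultant_mul_right_of_le {K : Type*} [Field K] (f g h : K[X]) {m n : ℕ}
    (hg : g.natDegree ≤ m) (hh : h.natDegree ≤ n) :
    resultant f (g * h) f.natDegree (m + n) =
      resultant f g f.natDegree m * resultant f h f.natDegree n := by
  obtain ⟨c, rfl⟩ := Nat.exists_eq_add_of_le hg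
  obtain ⟨d, rfl⟩ := Nat.exists_eq_add_of_le hh
  rw [show g.natDegree + c + (h.natDegree + d) = g.natDegree + h.natDegree + (c + d) by ring,
    resultant_add_right_deg _ _ _ _ _ natDegree_mul_le,
    resultant_add_right_deg _ _ _ _ _ le_rfl, resultant_add_right_deg _ _ _ _ _ le_rfl,
    resultant_mul_right _ _ _ _ le_rfl]
  ring

/-- Modulo `F`, the derivative of `F * G` is `F' * G`. -/
theorem resultant_derivative_mul {K : Type*} [Field K] (F G : K[X])
    (hF : 0 < F.natDegree) (hG : 0 < G.natDegree) :
    resultant F (derivative (F * G)) F.natDegree (F.natDegree + G.natDegree - 1) =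
      resultant F (derivative F) F.natDegree (F.natDegree - 1) * resultant F G := by
  have hG' := natDegree_derivative_le G
  rw [derivative_mul, resultant_add_mul_right _ _ _ _ _ (by omega) le_rfl,
    show F.natDegree + G.natDegree - 1 = (F.natDegree - 1) + G.natDegree by omega,
    resultant_mul_right_of_le _ _ _ (natDegree_derivative_le F) le_rfl]

theorem polyDisc_mul {K : Type*} [Field K] (F G : K[X])
    (hF : 0 < F.natDegree) (hG : 0 < G.natDegree) :
    polyDisc (F * G) = polyDisc F * polyDisc G * resultant F G ^ 2 := by
  have hF0 : F ≠ 0 := ne_zero_of_natDegree_gt hF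
  have hG0 : G ≠ 0 := ne_zero_of_natDegree_gt hG
  have hd : (derivative (F * G)).natDegree ≤ F.natDegree + G.natDegree - 1 :=
    (natDegree_derivative_le _).trans (Nat.sub_le_sub_right natDegree_mul_le 1)
  have key : resultant (F * G) (derivative (F * G)) (F.natDegree + G.natDegree)
      (F.natDegree + G.natDegree - 1) =
      (-1) ^ (F.natDegree * G.natDegree) *
      (resultant F (derivative F) F.natDegree (F.natDegree - 1) *
      resultant G (derivative G) G.natDegree (G.natDegree - 1) * resultant F G ^ 2) := by
    have hGF := resultant_derivative_mul G F hG hF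
    rw [mul_comm G F, add_comm G.natDegree, resultant_comm G F,
      mul_comm G.natDegree F.natDegree] at hGF
    rw [resultant_mul_left _ _ _ _ hd, resultant_derivative_mul F G hF hG, hGF]
    ring
  have hexp : (F.natDegree + G.natDegree) * (F.natDegree + G.natDegree - 1) / 2 =
      F.natDegree * (F.natDegree - 1) / 2 + G.natDegree * (G.natDegree - 1) / 2 +
      F.natDegree * G.natDegree := by
    simp only [← Finset.sum_range_id]
    rw [Finset.sum_range_add, Finset.sum_add_distrib]
    simp
    ring
  have hs : ((-1 : K) ^ (F.natDegree * G.natDegree)) ^ 2 = 1 := by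
    rw [← pow_mul, mul_comm, pow_mul]; simp
  rw [polyDisc_eq, polyDisc_eq, polyDisc_eq, natDegree_mul hF0 hG0, key, hexp, leadingCoeff_mul]
  rw [pow_add, pow_add]
  have hf := leadingCoeff_ne_zero.mpr hF0
  have hg := leadingCoeff_ne_zero.mpr hG0
  generalize (-1 : K) ^ (F.natDegree * G.natDegree) = s at hs
  field_simp
  rw [hs]
  ring

theorem polyDisc_eq_zero_of_not_separable {K : Type*} [Field K] (F : K[X])
    (hF : ¬ F.Separable) : polyDisc F = 0 := by
  by_cases hF0 : F = 0
  · simp [polyDisc_eq, hF0]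
  obtain ⟨c, hc⟩ := Nat.exists_eq_add_of_le (natDegree_derivative_le F)
  have h0 : resultant F (derivative F) = 0 := resultant_eq_zero_iff.mpr ⟨Or.inl hF0, hF⟩
  rw [polyDisc_eq, hc, resultant_add_right_deg _ _ _ _ _ le_rfl, h0]
  simp

/-- If `F` has `n = deg F` distinct roots `r i` in `L`, its discriminant is
`(lc(F)^(n-1) ∏_{i<j} (r j - r i))²`. This holds because
`Res(F, F') = lc(F)^(n-1) ∏ i, F'(r i)` and `F'(r i) = lc(F) ∏_{j≠i} (r i - r j)`. -/
theorem algebraMap_polyDisc_eq_sq {K L : Type*} [Field K] [Field L] [Algebra K L] (F : K[X])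
    {n : ℕ} (hn : F.natDegree = n) (hpos : 0 < n) (r : Fin n → L) (hr : Function.Injective r)
    (hroot : ∀ i, aeval (r i) F = 0) :
    algebraMap K L (polyDisc F) =
      (algebraMap K L F.leadingCoeff ^ (n - 1) * (Matrix.vandermonde r).det) ^ 2 := by
  set P := F.map (algebraMap K L) with hP
  have hPn : P.natDegree = n := (natDegree_map _).trans hn
  have hF0 : F ≠ 0 := ne_zero_of_natDegree_gt (hn ▸ hpos)
  have hP0 : P ≠ 0 := (Polynomial.map_ne_zero_iff (algebraMap K L).injective).mpr hF0
  have hroots : P.roots = Finset.univ.val.map r := by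
    have := roots_eq_of_natDegree_le_card_of_ne_zero (p := P)
      (S := Finset.univ.map ⟨r, hr⟩) (by simpa [hP] using hroot) (by simp [hPn]) hP0
    simpa using this
  have hsplit : P.Splits := splits_iff_card_roots.mpr (by simp [hroots, hPn])
  have hlc : P.leadingCoeff = algebraMap K L F.leadingCoeff := leadingCoeff_map _
  have hder : ∀ i, eval (r i) (derivative P) =
      algebraMap K L F.leadingCoeff * ∏ j ∈ {i}ᶜ, (r i - r j) := by
    intro i
    have h1 : P = C (algebraMap K L F.leadingCoeff) *
        ((Finset.univ.val.map r).map fun a => X - C a).prod := by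
      rw [← hroots, ← hlc]; exact hsplit.eq_prod_roots
    rw [h1, derivative_C_mul, eval_mul, eval_C, eval_multiset_prod_X_sub_C_derivative
      (Multiset.mem_map_of_mem r (Finset.mem_univ_val i)), ← Multiset.map_erase r hr,
      Multiset.map_map, ← Finset.erase_val, Finset.compl_singleton]
    rfl
  have hres : algebraMap K L (resultant F (derivative F) n (n - 1)) =
      algebraMap K L F.leadingCoeff ^ (n - 1) *
        ∏ i, (algebraMap K L F.leadingCoeff * ∏ j ∈ {i}ᶜ, (r i - r j)) := by
    rw [← resultant_map_map, ← derivative_map, ← hP]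
    have := resultant_eq_prod_eval P (derivative P) (n - 1)
      (hPn ▸ natDegree_derivative_le P) hsplit
    rw [hPn] at this
    rw [this, hroots, hlc, Multiset.map_map]
    congr 1
    exact Finset.prod_congr rfl fun i _ => hder i
  -- There are `n * (n - 1) / 2` pairs `i < j`; each contributes one sign when the product over
  -- `i ≠ j` is rewritten as a product of squares over `i < j`.
  have hsgn : ∏ i : Fin n, ∏ j > i, (-1 : L) = (-1) ^ (n * (n - 1) / 2) := by
    rw [← Finset.sum_range_id, ← Finset.sum_range_reflect, ← Fin.sum_univ_eq_sum_range (fun i => n - 1 - i) n, ← Finset.prod_pow_eq_pow_sum]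
    refine Finset.prod_congr rfl fun i _ => ?_
    rw [Finset.prod_const, Fin.card_Ioi]
  have hoff : ∏ i, ∏ j ∈ {i}ᶜ, (r i - r j) =
      (-1) ^ (n * (n - 1) / 2) * (Matrix.vandermonde r).det ^ 2 := by
    rw [← Finset.prod_prod_Ioi_mul_eq_prod_prod_off_diag fun j i => r i - r j, ← hsgn,
      Matrix.det_vandermonde, ← Finset.prod_pow, ← Finset.prod_mul_distrib]
    refine Finset.prod_congr rfl fun i _ => ?_
    rw [← Finset.prod_pow, ← Finset.prod_mul_distrib]
    refine Finset.prod_congr rfl fun j _ => ?_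
    ring
  have hs : ((-1 : L) ^ (n * (n - 1) / 2)) ^ 2 = 1 := by
    rw [← pow_mul, mul_comm, pow_mul]; simp
  have hl0 : algebraMap K L F.leadingCoeff ≠ 0 := by simpa using hF0
  rw [polyDisc_eq, hn, map_div₀, map_mul, hres, Finset.prod_mul_distrib, hoff]
  simp only [map_pow, map_neg, map_one, Finset.prod_const, Finset.card_univ, Fintype.card_fin]
  rw [div_eq_iff hl0]
  have : algebraMap K L F.leadingCoeff ^ n =
    algebraMap K L F.leadingCoeff ^ (n - 1) * algebraMap K L F.leadingCoeff := by
    rw [← pow_succ]; congr 1; omega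
  rw [this]
  linear_combination (algebraMap K L F.leadingCoeff * (algebraMap K L F.leadingCoeff ^ (n - 1)
    * (Matrix.vandermonde r).det) ^ 2) * hs

theorem quadraticChar_polyDisc_of_irreducible {K : Type*} [Field K] [Fintype K] [DecidableEq K]
    (hq : ringChar K ≠ 2) (f : K[X]) (hf : Irreducible f) :
    quadraticChar K (polyDisc f) = (-1) ^ (f.natDegree - 1) := by
  have : Fact (Irreducible f) := ⟨hf⟩
  obtain ⟨n, hn⟩ : ∃ n, f.natDegree = n := ⟨_, rfl⟩
  have hpos : 0 < n := hn ▸ hf.natDegree_pos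
  rw [hn]
  have hfin : Module.finrank K (AdjoinRoot f) = n := by
    rw [← hn, (AdjoinRoot.powerBasis hf.ne_zero).finrank, AdjoinRoot.powerBasis_dim]
  have : Module.Finite K (AdjoinRoot f) := (AdjoinRoot.powerBasis hf.ne_zero).finite
  have : Finite (AdjoinRoot f) := Module.finite_of_finite K
  set L := AdjoinRoot f with hL
  set φ : L →ₐ[K] L := FiniteField.frobeniusAlgHom K L with hφ
  -- The conjugates `α^(q^i)`; they are distinct because `α` generates `L` and `φ` has order `n`.
  set r : Fin n → L := fun i => (φ ^ (i : ℕ)) (AdjoinRoot.root f) with hr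
  have hinj : Function.Injective r := by
    intro i j hij
    have h1 : φ ^ (i : ℕ) = φ ^ (j : ℕ) := AdjoinRoot.algHom_ext hij
    have h2 := (FiniteField.bijective_frobeniusAlgHom_pow K L).1
      (a₁ := Fin.cast hfin.symm i) (a₂ := Fin.cast hfin.symm j) h1
    simpa [Fin.ext_iff] using h2
  have hroot : ∀ i, aeval (r i) f = 0 := by
    intro i
    rw [hr, aeval_algHom_apply, AdjoinRoot.aeval_eq, AdjoinRoot.mk_self, map_zero]
  have hcyc : φ ^ n = 1 := by
    rw [← hfin, ← FiniteField.orderOf_frobeniusAlgHom K L, pow_orderOf_eq_one]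
  have hshift : ∀ i, φ (r i) = r (finRotate n i) := by
    intro i
    have h1 : φ (r i) = (φ ^ ((i : ℕ) + 1)) (AdjoinRoot.root f) := by
      rw [pow_succ']; rfl
    rw [h1]
    obtain ⟨m, hm⟩ : ∃ m, n = m + 1 := ⟨n - 1, by omega⟩
    subst hm
    by_cases hi : i = Fin.last m
    · subst hi
      rw [finRotate_last]
      simp [hr, hcyc]
    · have h2 : ((finRotate (m + 1) i : Fin (m + 1)) : ℕ) = i + 1 := coe_finRotate_of_ne_last hi
      simp only [hr, h2]
  set Δ : L := algebraMap K L f.leadingCoeff ^ (n - 1) * (Matrix.vandermonde r).det with hΔ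
  have hdisc := algebraMap_polyDisc_eq_sq f hn hpos r hinj hroot
  rw [← hΔ] at hdisc
  have hΔ0 : Δ ≠ 0 := mul_ne_zero (pow_ne_zero _ (by simpa using hf.ne_zero))
    (Matrix.det_vandermonde_ne_zero_iff.mpr hinj)
  have hφΔ : φ Δ = (-1) ^ (n - 1) * Δ := by
    have h1 : φ (Matrix.vandermonde r).det = (-1) ^ (n - 1) * (Matrix.vandermonde r).det := by
      have h2 := Matrix.det_permute (finRotate n) (Matrix.vandermonde r)
      rw [sign_finRotate] at h2
      rw [AlgHom.map_det]
      have h3 : φ.mapMatrix (Matrix.vandermonde r) =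
          (Matrix.vandermonde r).submatrix (finRotate n) id := by
        ext i j
        simp [Matrix.vandermonde_apply, hshift]
      rw [h3, h2]
      simp
    rw [hΔ, map_mul, map_pow, AlgHom.commutes, h1]
    ring
  have hodd : Fintype.card K % 2 = 1 := FiniteField.odd_card_of_char_ne_two hq
  -- The Frobenius endomorphism is by definition `x ↦ x ^ q`.
  have hpow : Δ ^ Fintype.card K = (-1) ^ (n - 1) * Δ := hφΔ
  have hpow' : (Δ ^ 2) ^ (Fintype.card K / 2) = (-1) ^ (n - 1) := by
    apply mul_right_cancel₀ hΔ0
    rw [← hpow, ← pow_mul, ← pow_succ]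
    congr 1; omega
  have hcast : ((quadraticChar K (polyDisc f) : ℤ) : K) = (((-1) ^ (n - 1) : ℤ) : K) := by
    rw [quadraticChar_eq_pow_of_char_ne_two' hq]
    apply (algebraMap K L).injective
    rw [map_pow, hdisc, hpow']
    simp
  -- Both integers lie in `{0, 1, -1}`, on which the cast to `K` is injective as `2 ≠ 0`.
  refine Int.cast_injOn_of_ringChar_ne_two hq ?_ ?_ hcast
  · rcases (quadraticChar_isQuadratic K) (polyDisc f) with h | h | h <;> simp [h]
  · rcases neg_one_pow_eq_or ℤ (n - 1) with h | h <;> simp [h]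

theorem card_factors_mul {K : Type*} [Field K] {F G : K[X]} (hF : F ≠ 0) (hG : G ≠ 0) :
    (UniqueFactorizationMonoid.factors (F * G)).card =
      (UniqueFactorizationMonoid.factors F).card + (UniqueFactorizationMonoid.factors G).card := by
  rw [Multiset.card_eq_card_of_rel (UniqueFactorizationMonoid.factors_mul hF hG),
    Multiset.card_add]

theorem card_factors_irreducible {K : Type*} [Field K] {F : K[X]} (hF : Irreducible F) :
    (UniqueFactorizationMonoid.factors F).card = 1 := by
  obtain ⟨p, -, hp⟩ := UniqueFactorizationMonoid.factors_eq_singleton_of_irreducible hF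
  rw [hp, Multiset.card_singleton]

theorem quadraticChar_polyDisc_of_squarefree {K : Type*} [Field K] [Fintype K] [DecidableEq K]
    (hq : ringChar K ≠ 2) (F : K[X]) (hF : 0 < F.natDegree) (hsq : Squarefree F) :
    (-1) ^ (UniqueFactorizationMonoid.factors F).card =
      (-1) ^ F.natDegree * quadraticChar K (polyDisc F) := by
  induction hn : F.natDegree using Nat.strong_induction_on generalizing F with
  | _ n ih =>
    by_cases hirr : Irreducible F
    · rw [card_factors_irreducible hirr, quadraticChar_polyDisc_of_irreducible hq F hirr, ← hn,
        ← pow_add, show F.natDegree + (F.natDegree - 1) = 2 * (F.natDegree - 1) + 1 by omega,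
        pow_succ _ (2 * _), pow_mul]
      simp
    · have hunit : ¬ IsUnit F := fun h => by rw [natDegree_eq_zero_of_isUnit h] at hF; omega
      have h0 : F ≠ 0 := hsq.ne_zero
      obtain ⟨G, H, hG, hH, rfl⟩ : ∃ G H : K[X], ¬ IsUnit G ∧ ¬ IsUnit H ∧ F = G * H := by
        by_contra! h
        refine hirr ⟨hunit, fun {a b} hab => ?_⟩
        by_contra! hc
        exact h a b hc.1 hc.2 hab
      have hG0 := left_ne_zero_of_mul h0
      have hH0 := right_ne_zero_of_mul h0
      have hGp : 0 < G.natDegree := natDegree_pos_iff_degree_pos.mpr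
        (degree_pos_of_ne_zero_of_nonunit hG0 hG)
      have hHp : 0 < H.natDegree := natDegree_pos_iff_degree_pos.mpr
        (degree_pos_of_ne_zero_of_nonunit hH0 hH)
      rw [natDegree_mul hG0 hH0] at hn
      obtain ⟨hrel, hsG, hsH⟩ := squarefree_mul_iff.mp hsq
      have hres : resultant G H ≠ 0 := resultant_ne_zero _ _ hrel.isCoprime
      rw [card_factors_mul hG0 hH0, polyDisc_mul G H hGp hHp, map_mul, map_mul, map_pow,
        quadraticChar_sq_one hres, ← hn, pow_add, pow_add,
        ih _ (by omega) G hGp hsG rfl, ih _ (by omega) H hHp hsH rfl]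
      ring

/-- Pellet's formula: over a finite field of odd characteristic,
`μ(F) = (-1)^{deg F} · χ₂(disc F)` for every polynomial `F` of positive degree,
where `χ₂` is the quadratic character of `F_q`. -/
theorem pellet_formula (Fq : Type*) [Field Fq] [Fintype Fq] [DecidableEq Fq]
    (hq : ringChar Fq ≠ 2) (F : Polynomial Fq) (hF : 0 < F.natDegree) :
    polyMoebius F = (-1) ^ F.natDegree * quadraticChar Fq (polyDisc F) := by
  unfold polyMoebius
  split_ifs with hsq
  · exact quadraticChar_polyDisc_of_squarefree hq F hF hsq
  · rw [polyDisc_eq_zero_of_not_separable F (mt PerfectField.separable_iff_squarefree.mp hsq)]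
    simp
end

section
/- For integers n ≥ 1 and N ≥ 1, ∫_{U(N)} |tr(U^n)|² dU = min(n, N); in particular, for n ≥ N this equals N. -/
open MeasureTheory Matrix

noncomputable instance (N : ℕ) : MeasurableSpace (unitaryGroup (Fin N) ℂ) := borel _
instance (N : ℕ) : BorelSpace (unitaryGroup (Fin N) ℂ) := ⟨rfl⟩

/-!
Write `T_j = tr U^j` and let `newt s T k` be the coefficient of `z ^ k` in
`exp (s * ∑_{i ≥ 1} T_i z ^ i / i)`. For `s = 1` these are the complete homogeneous symmetric
functions `h_k` of the eigenvalues of `U`, for `s = -1` they are `e'_k = (-1) ^ k e_k`, the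
coefficients of `det (1 - z U)`; hence `e'_k = 0` for `k > N` (`newt_eq_zero`). The generating
series satisfy `e' * h = 1` (`newt_mul_newt`), and applying `z d/dz` to this gives, for `n ≥ 1`
and every constant `M`, `T_n = ∑_{i + j = n} (M - i) e'_i h_j` (`pw_eq_sum`).

It therefore suffices to know the moments `mom i j = E[e'_i h_j conj T_{i + j}]`. These come from
integration by parts on `U(N)`. Invariance of Haar measure under the one-parameter subgroups
`exp (t X)`, `X` skew-Hermitian, shows that `E[tr (X ∇f)] = 0`, first for skew-Hermitian `X` and then
for all complex matrices by linearity (`integral_trace_mul_grad`). Taking `f = φ * (U ^ j)_{ab}` and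
`X = E_{ab}`, and summing over `a, b`, gives the loop (Schwinger–Dyson) equation `loop`. A suitable
combination of loop equations turns the left-hand side into an eigenvalue equation for `newt s`
(`div_identity`, `loop_newt`). Together with a recursion for the traces of products
`Ê_k Ĥ_l`, where `Ê` and `Ĥ` are the gradients of `e'` and `h` up to sign (`trace_hat_mul_hat`),
this determines by induction

* `mom 0 n = 1` for `n ≥ 1` (`mom_h`);
* `mom k l = 0` for `0 < k < N` and `l ≥ 1` (`mom_middle`), because the coefficient `k * (k - N)` of
  `mom k l` in the resulting equation does not vanish;
* `mom k l = 0` for `k > N` (`mom_big`).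

With `M = min n N` the only remaining index in the expansion of `T_n`, namely `i = M`, carries the
coefficient `0`, and the `i = 0` term contributes `M`.
-/

/-! ### Newton's recursion and generating series -/

/-- The coefficients of `exp (s * ∑_{i ≥ 1} T i * z ^ i / i)`, defined by Newton's recursion. The value
`T 0` plays no role. For `T` the power sums of a finite family, `newt 1 T k` is the complete
homogeneous symmetric function `h_k` and `newt (-1) T k` is `(-1) ^ k e_k`. -/
noncomputable def newt (s : ℂ) (T : ℕ → ℂ) : ℕ → ℂ
  | 0 => 1
  | k + 1 => s / (k + 1) * ∑ i : Fin (k + 1), newt s T i * T (k + 1 - i)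

/-- The Euler operator `z d/dz` on formal power series. -/
noncomputable def eulerD (f : PowerSeries ℂ) : PowerSeries ℂ :=
  PowerSeries.X * PowerSeries.derivative ℂ f

/-- The generating series `∑_{j ≥ 1} T j * z ^ j`, without constant term. -/
noncomputable def posSeries (T : ℕ → ℂ) : PowerSeries ℂ :=
  PowerSeries.mk fun j => if j = 0 then 0 else T j

lemma coeff_eulerD (f : PowerSeries ℂ) (k : ℕ) :
    PowerSeries.coeff k (eulerD f) = k * PowerSeries.coeff k f := by
  cases k with
  | zero => simp [eulerD]
  | succ k => simp [eulerD, PowerSeries.coeff_succ_X_mul, PowerSeries.coeff_derivative, mul_comm]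

lemma eulerD_mul (f g : PowerSeries ℂ) : eulerD (f * g) = eulerD f * g + f * eulerD g := by
  simp only [eulerD, Derivation.leibniz, smul_eq_mul]; ring

lemma eulerD_smul (s : ℂ) (f : PowerSeries ℂ) : eulerD (s • f) = s • eulerD f := by
  rw [eulerD, eulerD, Derivation.map_smul, mul_smul_comm]

lemma coeff_zero_posSeries (T : ℕ → ℂ) : PowerSeries.coeff 0 (posSeries T) = 0 := by
  simp [posSeries]

/-- `z d/dz` of `exp (s * ∑ T i * z ^ i / i)` is `s * ∑ T i * z ^ i` times the series. -/
lemma eulerD_newt (s : ℂ) (T : ℕ → ℂ) :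
    eulerD (PowerSeries.mk (newt s T)) = s • (PowerSeries.mk (newt s T) * posSeries T) := by
  ext k
  rw [coeff_eulerD, PowerSeries.coeff_mk, map_smul, PowerSeries.coeff_mul]
  cases k with
  | zero => simp [posSeries]
  | succ k =>
    rw [newt, Finset.Nat.sum_antidiagonal_eq_sum_range_succ_mk, Finset.sum_range_succ,
      Finset.sum_range]
    have h : ((k : ℂ) + 1) ≠ 0 := by exact_mod_cast Nat.succ_ne_zero k
    have h2 : ∀ i : Fin (k + 1), k + 1 - (i : ℕ) ≠ 0 := fun i => by omega
    simp only [posSeries, PowerSeries.coeff_mk, h2, if_false, smul_eq_mul, Nat.sub_self, if_true,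
      mul_zero, add_zero]
    push_cast
    field_simp

/-- Uniqueness for the formal differential equation `z f' = f P` with `P` vanishing at `0`. -/
lemma eq_of_eulerD {f g P : PowerSeries ℂ} (hP : PowerSeries.coeff 0 P = 0)
    (h0 : PowerSeries.coeff 0 f = PowerSeries.coeff 0 g)
    (hf : eulerD f = f * P) (hg : eulerD g = g * P) : f = g := by
  ext k
  induction k using Nat.strong_induction_on with
  | _ k ih =>
    rcases Nat.eq_zero_or_pos k with rfl | hk
    · exact h0
    have hk' : (k : ℂ) ≠ 0 := by exact_mod_cast hk.ne'
    apply mul_left_cancel₀ hk'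
    rw [← coeff_eulerD, ← coeff_eulerD, hf, hg, PowerSeries.coeff_mul, PowerSeries.coeff_mul]
    refine Finset.sum_congr rfl fun ij hij => ?_
    have hij' := Finset.HasAntidiagonal.mem_antidiagonal.mp hij
    rcases Nat.eq_zero_or_pos ij.2 with h | h
    · simp [h, hP]
    · rw [ih ij.1 (by omega)]

/-- The generating series of `(-1) ^ k e_k` and `h_k` are inverse to each other. -/
lemma newt_mul_newt (T : ℕ → ℂ) :
    PowerSeries.mk (newt (-1) T) * PowerSeries.mk (newt 1 T) = 1 := by
  apply eq_of_eulerD (P := 0) (by simp)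
  · simp [newt]
  · rw [eulerD_mul, eulerD_newt, eulerD_newt]
    simp only [neg_smul, one_smul, mul_zero]; ring
  · simp [eulerD]

/-! ### Vanishing of `e_k` for `k > N` -/

/-- The linear coefficient in `Y` of `p (X + Y)` is `p'(X)`; the outer polynomial variable is `Y`, and
`X` is the variable of the coefficient ring of power series. -/
lemma coeff_taylor_one (p : Polynomial ℂ) :
    (Polynomial.derivative (p.eval₂ (Polynomial.C.comp (PowerSeries.C (R := ℂ)))
      (Polynomial.C PowerSeries.X + Polynomial.X))).eval 0
      = ((Polynomial.derivative p : Polynomial ℂ) : PowerSeries ℂ) := by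
  induction p using Polynomial.induction_on' with
  | add p q hp hq => simp only [Polynomial.eval₂_add, map_add, Polynomial.eval_add, hp, hq,
      Polynomial.coe_add]
  | monomial n a =>
    rw [Polynomial.eval₂_monomial, Polynomial.derivative_monomial]
    rw [← Polynomial.C_mul_X_pow_eq_monomial]
    simp only [Polynomial.derivative_mul, Polynomial.derivative_pow]
    simp [mul_assoc]
    exact Or.inl (map_natCast (Polynomial.coeToPowerSeries.ringHom (R := ℂ)) n).symm

/-- Jacobi's formula for `det (1 - z A)`, with `(1 - z A)⁻¹ = ∑ A ^ j z ^ j` as formal power series: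
`z d/dz det (1 - z A) = - det (1 - z A) * ∑_{j ≥ 1} tr (A ^ j) z ^ j`. -/
lemma eulerD_charpolyRev {N : ℕ} (A : Matrix (Fin N) (Fin N) ℂ) :
    eulerD (A.charpolyRev : PowerSeries ℂ)
      = (A.charpolyRev : PowerSeries ℂ) * (-posSeries fun j => trace (A ^ j)) := by
  set M : Matrix (Fin N) (Fin N) (PowerSeries ℂ) := A.map (PowerSeries.C (R := ℂ)) with hM
  set G : Matrix (Fin N) (Fin N) (PowerSeries ℂ) :=
    Matrix.of fun a b => PowerSeries.mk fun i => (A ^ i) a b with hG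
  have hMG : (PowerSeries.X : PowerSeries ℂ) • (M * G) = G - 1 := by
    ext a b k
    cases k with
    | zero =>
      simp [hG, Matrix.one_apply]
    | succ k =>
      simp [hG, hM, PowerSeries.coeff_succ_X_mul, Matrix.mul_apply, pow_succ', Matrix.one_apply, apply_ite]
  have hinv : (1 - (PowerSeries.X : PowerSeries ℂ) • M) * G = 1 := by
    rw [sub_mul, smul_mul_assoc, hMG]; simp
  have hinv' : G * (1 - (PowerSeries.X : PowerSeries ℂ) • M) = 1 := mul_eq_one_comm.mp hinv
  have hA : (A.charpolyRev : PowerSeries ℂ) = det (1 - (PowerSeries.X : PowerSeries ℂ) • M) := by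
    rw [charpolyRev, ← Polynomial.coeToPowerSeries.ringHom_apply, RingHom.map_det]
    congr 1
    ext a b : 1
    simp [hM, Matrix.one_apply]
    split_ifs <;> simp [mul_comm]
  have hT := coeff_taylor_one A.charpolyRev
  rw [charpolyRev, ← Polynomial.coe_eval₂RingHom, RingHom.map_det] at hT
  -- `1 - (X + Y) A` factors as `(1 - X A) (1 - Y G A)`, with `G` the inverse of `1 - X A`.
  have hfac : ((Polynomial.eval₂RingHom (Polynomial.C.comp (PowerSeries.C (R := ℂ)))
      (Polynomial.C PowerSeries.X + Polynomial.X)).mapMatrix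
        (1 - (Polynomial.X : Polynomial ℂ) • A.map Polynomial.C))
      = (1 - (PowerSeries.X : PowerSeries ℂ) • M).map Polynomial.C *
        (1 + (Polynomial.X : Polynomial (PowerSeries ℂ)) • (-(G * M)).map Polynomial.C) := by
    have h1 : (1 - (PowerSeries.X : PowerSeries ℂ) • M).map Polynomial.C *
        (-(G * M)).map Polynomial.C = (-M).map Polynomial.C := by
      rw [← Matrix.map_mul, mul_neg, ← mul_assoc, hinv, one_mul]
    rw [mul_add, mul_smul_comm, h1]
    ext a b : 1
    simp [hM, Matrix.one_apply]
    split_ifs <;> simp <;> ring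
  rw [hfac, det_mul, ← RingHom.mapMatrix_apply, ← RingHom.map_det, ← hA, Polynomial.derivative_C_mul,
    Polynomial.eval_C_mul, derivative_det_one_add_X_smul, ← charpolyRev] at hT
  rw [eulerD]
  change _ * PowerSeries.derivative ℂ _ = _
  rw [PowerSeries.derivative_coe, ← hT, mul_left_comm]
  congr 1
  rw [trace_neg, trace_mul_comm, mul_neg, ← smul_eq_mul, ← trace_smul, hMG]
  congr 1
  ext k
  by_cases hk : k = 0
  · simp [posSeries, hk, trace, hG]
  · have : PowerSeries.coeff k (N : PowerSeries ℂ) = 0 := by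
      rw [← map_natCast (PowerSeries.C (R := ℂ)), PowerSeries.coeff_C, if_neg hk]
    simp [posSeries, hk, trace, hG, this]

/-- `e_k = 0` for `k > N`: `newt (-1)` of the traces of powers of `A` gives the coefficients of
`det (1 - z A)`, which has degree at most `N`. -/
lemma newt_eq_zero {N k : ℕ} (A : Matrix (Fin N) (Fin N) ℂ) (hk : N < k) :
    newt (-1) (fun j => trace (A ^ j)) k = 0 := by
  have h : PowerSeries.mk (newt (-1) fun j => trace (A ^ j)) = (A.charpolyRev : PowerSeries ℂ) := by
    apply eq_of_eulerD (P := -posSeries fun j => trace (A ^ j))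
    · rw [map_neg, coeff_zero_posSeries, neg_zero]
    · rw [PowerSeries.coeff_mk, newt, Polynomial.coeff_coe, Polynomial.coeff_zero_eq_eval_zero,
        eval_charpolyRev]
    · rw [eulerD_newt]; simp
    · exact eulerD_charpolyRev A
  have h2 := congrArg (PowerSeries.coeff k) h
  rw [PowerSeries.coeff_mk, Polynomial.coeff_coe] at h2
  rw [h2, ← reverse_charpoly]
  apply Polynomial.coeff_eq_zero_of_natDegree_lt
  refine (Polynomial.reverse_natDegree_le _).trans_lt ?_
  rw [charpoly_natDegree_eq_dim]; simpa using hk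

/-! ### Integration by parts on the unitary group -/

lemma exp_mem {N : ℕ} {X : Matrix (Fin N) (Fin N) ℂ} (hX : Xᴴ = -X) (t : ℝ) :
    NormedSpace.exp (t • X) ∈ unitaryGroup (Fin N) ℂ := by
  rw [mem_unitaryGroup_iff', star_eq_conjTranspose, ← exp_conjTranspose, conjTranspose_smul, hX,
    star_trivial, smul_neg, ← exp_add_of_commute _ _ (Commute.refl (t • X)).neg_left,
    neg_add_cancel, NormedSpace.exp_zero]

/-- The one-parameter subgroup `t ↦ exp (t X)` of `U(N)` generated by a skew-Hermitian matrix `X`. -/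
noncomputable def flow {N : ℕ} (X : Matrix (Fin N) (Fin N) ℂ) (hX : Xᴴ = -X) (t : ℝ) :
    unitaryGroup (Fin N) ℂ := ⟨NormedSpace.exp (t • X), exp_mem hX t⟩

lemma flow_add {N : ℕ} (X : Matrix (Fin N) (Fin N) ℂ) (hX : Xᴴ = -X) (t h : ℝ) :
    flow X hX (t + h) = flow X hX t * flow X hX h := by
  apply Subtype.ext
  change NormedSpace.exp ((t + h) • X) = NormedSpace.exp (t • X) * NormedSpace.exp (h • X)
  rw [add_smul, exp_add_of_commute]
  exact ((Commute.refl X).smul_left t).smul_right h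

lemma flow_zero {N : ℕ} (X : Matrix (Fin N) (Fin N) ℂ) (hX : Xᴴ = -X) : flow X hX 0 = 1 := by
  apply Subtype.ext
  change NormedSpace.exp ((0 : ℝ) • X) = 1
  rw [zero_smul, NormedSpace.exp_zero]

lemma hasDerivAt_flow {N : ℕ} (X : Matrix (Fin N) (Fin N) ℂ) (hX : Xᴴ = -X) (a b : Fin N) :
    HasDerivAt (fun t : ℝ => (flow X hX t : Matrix (Fin N) (Fin N) ℂ) a b) (X a b) 0 := by
  -- A local choice of norm: any norm inducing the product topology gives the entrywise derivative.
  let _ : NormedRing (Matrix (Fin N) (Fin N) ℂ) := Matrix.linftyOpNormedRing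
  let _ : NormedAlgebra ℝ (Matrix (Fin N) (Fin N) ℂ) := Matrix.linftyOpNormedAlgebra
  have h := hasDerivAt_exp_smul_const (𝕂 := ℝ) X (0 : ℝ)
  rw [zero_smul, NormedSpace.exp_zero, one_mul] at h
  exact hasDerivAt_pi.mp (hasDerivAt_pi.mp h a) b

/-- `G` is a continuous gradient of the continuous function `f` on `U(N)`: the derivative of `f` at
`U` along the right-invariant vector field `X U` is `tr (X G(U))`, for every skew-Hermitian `X`. -/
structure HasGrad {N : ℕ} (f : unitaryGroup (Fin N) ℂ → ℂ)
    (G : unitaryGroup (Fin N) ℂ → Matrix (Fin N) (Fin N) ℂ) : Prop where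
  cont : Continuous f
  cont_grad : Continuous G
  deriv : ∀ X (hX : Xᴴ = -X) (U : unitaryGroup (Fin N) ℂ),
    HasDerivAt (fun t : ℝ => f (flow X hX t * U)) (trace (X * G U)) 0

instance (N : ℕ) : CompactSpace (unitaryGroup (Fin N) ℂ) := by
  apply (isCompact_iff_compactSpace (s := (unitaryGroup (Fin N) ℂ : Set (Matrix (Fin N) (Fin N) ℂ)))).mp
  refine IsCompact.of_isClosed_subset (s := Set.univ.pi fun _ => Set.univ.pi fun _ =>
    Metric.closedBall (0 : ℂ) 1) ?_ ?_ ?_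
  · exact isCompact_univ_pi fun _ => isCompact_univ_pi fun _ => isCompact_closedBall _ _
  · have : (unitaryGroup (Fin N) ℂ : Set (Matrix (Fin N) (Fin N) ℂ)) = {A | star A * A = 1} := by
      ext A; exact mem_unitaryGroup_iff'
    rw [this]
    exact isClosed_eq (by fun_prop) (by fun_prop)
  · intro A hA a _ b _
    simpa using entry_norm_bound_of_unitary hA a b

lemma integrable_of_cont {N : ℕ} (μ : Measure (unitaryGroup (Fin N) ℂ)) [IsProbabilityMeasure μ]
    {f : unitaryGroup (Fin N) ℂ → ℂ} (hf : Continuous f) : Integrable f μ :=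
  hf.integrable_of_hasCompactSupport (HasCompactSupport.of_compactSpace f)

lemma HasGrad.deriv_at {N : ℕ} {f : unitaryGroup (Fin N) ℂ → ℂ}
    {G : unitaryGroup (Fin N) ℂ → Matrix (Fin N) (Fin N) ℂ} (h : HasGrad f G)
    (X : Matrix (Fin N) (Fin N) ℂ) (hX : Xᴴ = -X) (U : unitaryGroup (Fin N) ℂ) (t : ℝ) :
    HasDerivAt (fun t : ℝ => f (flow X hX t * U)) (trace (X * G (flow X hX t * U))) t := by
  have h1 := h.deriv X hX (flow X hX t * U)
  have h2 : (fun s : ℝ => f (flow X hX s * U))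
      = fun s : ℝ => (fun r : ℝ => f (flow X hX r * (flow X hX t * U))) (s - t) := by
    funext s
    simp only
    rw [← mul_assoc, ← flow_add, sub_add_cancel]
  rw [h2]
  refine HasDerivAt.comp_sub_const
    (f := fun r : ℝ => f (flow X hX r * (flow X hX t * U))) t t ?_
  rwa [sub_self]

/-- Differentiating the left-invariance of Haar measure along `exp (t X)`. -/
lemma integral_skew {N : ℕ} (μ : Measure (unitaryGroup (Fin N) ℂ)) [μ.IsHaarMeasure]
    [IsProbabilityMeasure μ] {f : unitaryGroup (Fin N) ℂ → ℂ}
    {G : unitaryGroup (Fin N) ℂ → Matrix (Fin N) (Fin N) ℂ} (h : HasGrad f G)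
    (X : Matrix (Fin N) (Fin N) ℂ) (hX : Xᴴ = -X) : ∫ U, trace (X * G U) ∂μ = 0 := by
  have hG := h.cont_grad
  have hf := h.cont
  have hc : Continuous fun U => trace (X * G U) := by fun_prop
  obtain ⟨B, hB⟩ := (isCompact_range hc).isBounded.exists_norm_le
  have key := hasDerivAt_integral_of_dominated_loc_of_deriv_le (μ := μ) (𝕜 := ℝ)
    (F := fun t U => f (flow X hX t * U)) (x₀ := 0) (s := Set.univ) (bound := fun _ => B)
    (F' := fun t U => trace (X * G (flow X hX t * U))) Filter.univ_mem
    (Filter.Eventually.of_forall fun t =>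
      (integrable_of_cont μ (by fun_prop)).aestronglyMeasurable)
    (integrable_of_cont μ (by fun_prop))
    (integrable_of_cont μ (by fun_prop)).aestronglyMeasurable
    (Filter.Eventually.of_forall fun U t _ => hB _ ⟨_, rfl⟩)
    (integrable_const _)
    (Filter.Eventually.of_forall fun U t _ => h.deriv_at X hX U t)
  have h2 := key.2
  simp only [integral_mul_left_eq_self f, flow_zero, one_mul] at h2
  exact h2.unique (hasDerivAt_const _ _)

/-- Every complex matrix is a complex combination of the skew-Hermitian matrices `X - Xᴴ` and
`i (X + Xᴴ)`, so `integral_skew` extends to all `X` by linearity. -/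
lemma integral_trace_mul_grad {N : ℕ} (μ : Measure (unitaryGroup (Fin N) ℂ)) [μ.IsHaarMeasure]
    [IsProbabilityMeasure μ] {f : unitaryGroup (Fin N) ℂ → ℂ}
    {G : unitaryGroup (Fin N) ℂ → Matrix (Fin N) (Fin N) ℂ} (h : HasGrad f G)
    (X : Matrix (Fin N) (Fin N) ℂ) : ∫ U, trace (X * G U) ∂μ = 0 := by
  have hG := h.cont_grad
  have h1 := integral_skew μ h (X - Xᴴ) (by simp)
  have h2 := integral_skew μ h (Complex.I • (X + Xᴴ)) (by
    simp [conjTranspose_smul, add_comm])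
  have h3 : ∀ U, trace (X * G U) = (1 / 2 : ℂ) * trace ((X - Xᴴ) * G U)
      + (-Complex.I / 2) * trace ((Complex.I • (X + Xᴴ)) * G U) := by
    intro U
    simp only [sub_mul, add_mul, smul_mul_assoc, trace_sub, trace_add, trace_smul, smul_eq_mul]
    linear_combination (1 / 2 : ℂ) * (trace (X * G U) + trace (Xᴴ * G U)) * Complex.I_sq
  simp_rw [h3]
  rw [integral_add, integral_const_mul, integral_const_mul, h1, h2]
  · simp
  · exact integrable_of_cont μ (by fun_prop)
  · exact integrable_of_cont μ (by fun_prop)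

/-! ### Calculus of gradients -/

namespace HasGrad
variable {N : ℕ} {f g : unitaryGroup (Fin N) ℂ → ℂ}
    {F G : unitaryGroup (Fin N) ℂ → Matrix (Fin N) (Fin N) ℂ}

lemma const (c : ℂ) : HasGrad (fun _ : unitaryGroup (Fin N) ℂ => c) (fun _ => 0) :=
  ⟨continuous_const, continuous_const, fun X hX U => by simpa using hasDerivAt_const _ _⟩

lemma mul (hf : HasGrad f F) (hg : HasGrad g G) :
    HasGrad (fun U => f U * g U) (fun U => g U • F U + f U • G U) := by
  have := hf.cont
  have := hg.cont
  have := hf.cont_grad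
  have := hg.cont_grad
  refine ⟨by fun_prop, by fun_prop, fun X hX U => ?_⟩
  have h := (hf.deriv X hX U).mul (hg.deriv X hX U)
  convert! h using 1
  simp only [flow_zero, one_mul, mul_add, mul_smul_comm, trace_add, trace_smul, smul_eq_mul]
  ring

lemma sum {ι : Type*} (s : Finset ι) {f : ι → unitaryGroup (Fin N) ℂ → ℂ}
    {F : ι → unitaryGroup (Fin N) ℂ → Matrix (Fin N) (Fin N) ℂ}
    (h : ∀ i ∈ s, HasGrad (f i) (F i)) :
    HasGrad (fun U => ∑ i ∈ s, f i U) (fun U => ∑ i ∈ s, F i U) := by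
  refine ⟨continuous_finsetSum _ fun i hi => (h i hi).cont,
    continuous_finsetSum _ fun i hi => (h i hi).cont_grad, fun X hX U => ?_⟩
  rw [Finset.mul_sum, trace_sum]
  exact HasDerivAt.fun_sum fun i hi => (h i hi).deriv X hX U

lemma const_mul (c : ℂ) (hf : HasGrad f F) :
    HasGrad (fun U => c * f U) (fun U => c • F U) := by
  simpa using (const c).mul hf

lemma star (hf : HasGrad f F) :
    HasGrad (fun U => star (f U)) (fun U => -(F U)ᴴ) := by
  have := hf.cont
  have := hf.cont_grad
  refine ⟨by fun_prop, by fun_prop, fun X hX U => ?_⟩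
  have h := (hf.deriv X hX U).star
  convert! h using 1
  rw [← trace_conjTranspose, conjTranspose_mul, hX, mul_neg, mul_neg, trace_neg, trace_neg,
    trace_mul_comm]

lemma entry (a b : Fin N) : HasGrad (fun U : unitaryGroup (Fin N) ℂ => U.1 a b)
    (fun U => U.1 * single b a 1) := by
  refine ⟨Continuous.matrix_elem continuous_subtype_val a b, by fun_prop, fun X hX U => ?_⟩
  have h : HasDerivAt (fun t : ℝ => ∑ c, (flow X hX t).1 a c * U.1 c b)
      (∑ c, X a c * U.1 c b) 0 :=
    HasDerivAt.fun_sum fun c _ => (hasDerivAt_flow X hX a c).mul_const _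
  convert! h using 1
  rw [← mul_assoc, trace_mul_single, mul_apply]
  simp

lemma pow_entry (j : ℕ) (a b : Fin N) :
    HasGrad (fun U : unitaryGroup (Fin N) ℂ => (U.1 ^ j) a b)
      (fun U => ∑ c ∈ Finset.range j, U.1 ^ (j - c) * single b a 1 * U.1 ^ c) := by
  induction j generalizing a b with
  | zero => simpa using const _
  | succ j ih =>
    have h := HasGrad.sum Finset.univ fun (d : Fin N) _ => (ih a d).mul (entry d b)
    convert! h using 2 with _ U
    · have h1 : ∑ i, (U.1 i b) • single i a (1 : ℂ) = U.1 * single b a 1 := by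
        ext x y
        simp [Matrix.sum_apply, mul_apply, single_apply, ite_and]
      have h2 : ∑ i, ((U.1 ^ j) a i) • single b i (1 : ℂ) = single b a 1 * U.1 ^ j := by
        ext x y
        simp [Matrix.sum_apply, mul_apply, single_apply, ite_and]
      rw [Finset.sum_add_distrib, Finset.sum_range_succ]
      congr 1
      · simp_rw [Finset.smul_sum]
        rw [Finset.sum_comm]
        refine Finset.sum_congr rfl fun c hc => ?_
        have hc' := Finset.mem_range.mp hc
        rw [Nat.sub_add_comm hc'.le, pow_succ, mul_assoc (U.1 ^ (j - c)), ← h1, Finset.mul_sum,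
          Finset.sum_mul]
        simp only [mul_smul_comm, smul_mul_assoc]
      · rw [Nat.add_sub_cancel_left, pow_one, mul_assoc, ← h2, Finset.mul_sum]
        simp only [mul_smul_comm]

lemma trace_pow (j : ℕ) :
    HasGrad (fun U : unitaryGroup (Fin N) ℂ => trace (U.1 ^ j)) (fun U => (j : ℂ) • U.1 ^ j) := by
  have h := HasGrad.sum Finset.univ fun (a : Fin N) _ => pow_entry j a a
  convert! h using 2 with _ U
  rw [Finset.sum_comm]
  have h1 : ∀ c ∈ Finset.range j, ∑ a, U.1 ^ (j - c) * single a a (1 : ℂ) * U.1 ^ c = U.1 ^ j := by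
    intro c hc
    have hc' := Finset.mem_range.mp hc
    rw [← Finset.sum_mul, ← Finset.mul_sum, sum_single_one, mul_one, ← pow_add,
      Nat.sub_add_cancel hc'.le]
  rw [Finset.sum_congr rfl h1, Finset.sum_const, Finset.card_range, Nat.cast_smul_eq_nsmul]

end HasGrad

/-! ### The loop equation -/

/-- The coefficient of `z ^ j` in `∑_{j ≥ 1} U ^ j * z ^ j`: the power `U ^ j`, except that it vanishes
at `j = 0`. -/
noncomputable def posPow {N : ℕ} (U : unitaryGroup (Fin N) ℂ) (j : ℕ) : Matrix (Fin N) (Fin N) ℂ :=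
  if j = 0 then 0 else U.1 ^ j

/-- The loop (Schwinger–Dyson) equation: integration by parts for `φ * (U ^ j)_{ab}` in the direction of
the matrix unit `E_{ab}`, summed over `a` and `b`. -/
lemma loop {N : ℕ} (μ : Measure (unitaryGroup (Fin N) ℂ)) [μ.IsHaarMeasure]
    [IsProbabilityMeasure μ] {φ : unitaryGroup (Fin N) ℂ → ℂ}
    {G : unitaryGroup (Fin N) ℂ → Matrix (Fin N) (Fin N) ℂ} (h : HasGrad φ G) (j : ℕ) :
    ∫ U, (φ U * ∑ c ∈ Finset.range j, trace (U.1 ^ c) * trace (U.1 ^ (j - c))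
      + trace (G U * posPow U j)) ∂μ = 0 := by
  rcases Nat.eq_zero_or_pos j with rfl | hj
  · simp [posPow]
  have hψ := fun a b => h.mul (HasGrad.pow_entry j a b)
  have h1 := fun a b => integral_trace_mul_grad μ (hψ a b) (single a b 1)
  have h2 : ∀ U : unitaryGroup (Fin N) ℂ,
      (φ U * ∑ c ∈ Finset.range j, trace (U.1 ^ c) * trace (U.1 ^ (j - c))
        + trace (G U * posPow U j)) = ∑ a, ∑ b, trace (single a b 1 * ((U.1 ^ j) a b • G U +
          φ U • ∑ c ∈ Finset.range j, U.1 ^ (j - c) * single b a 1 * U.1 ^ c)) := by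
    intro U
    have h3 : ∀ a b, trace (single a b 1 * ((U.1 ^ j) a b • G U +
          φ U • ∑ c ∈ Finset.range j, U.1 ^ (j - c) * single b a 1 * U.1 ^ c))
        = (U.1 ^ j) a b * G U b a
          + φ U * ∑ c ∈ Finset.range j, (U.1 ^ (j - c)) b b * (U.1 ^ c) a a := by
      intro a b
      rw [trace_single_mul]
      simp [Matrix.sum_apply, mul_apply, single_apply, ite_and]
    simp_rw [h3, Finset.sum_add_distrib, ← Finset.mul_sum]
    rw [add_comm]
    congr 1
    · rw [posPow, if_neg hj.ne', trace_mul_comm]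
      simp only [trace, diag_apply, mul_apply]
    · congr 1
      simp_rw [Finset.sum_comm (t := Finset.range j), trace, Finset.sum_mul_sum, diag_apply]
      refine Finset.sum_congr rfl fun c _ => Finset.sum_congr rfl fun a _ =>
        Finset.sum_congr rfl fun b _ => mul_comm _ _
  simp_rw [h2]
  have h4 : ∀ a b, Integrable (fun U : unitaryGroup (Fin N) ℂ => trace (single a b 1 *
      ((U.1 ^ j) a b • G U +
          φ U • ∑ c ∈ Finset.range j, U.1 ^ (j - c) * single b a 1 * U.1 ^ c))) μ := by
    intro a b
    have := (hψ a b).cont_grad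
    exact integrable_of_cont μ (by fun_prop)
  rw [integral_finsetSum _ fun a _ => integrable_finsetSum _ fun b _ => h4 a b]
  refine Finset.sum_eq_zero fun a _ => ?_
  rw [integral_finsetSum _ fun b _ => h4 a b]
  exact Finset.sum_eq_zero fun b _ => h1 a b

/-! ### Gradients of the symmetric functions -/

/-- The power sum `T_j = tr (U ^ j)` of the eigenvalues of `U`. -/
noncomputable def pw {N : ℕ} (U : unitaryGroup (Fin N) ℂ) (j : ℕ) : ℂ := trace (U.1 ^ j)

/-- The matrix `∑_{i + j = k, j ≥ 1} newt s i • U ^ j`. Up to the factor `s` it is the gradient of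
`newt s (pw U) k`, see `hasGrad_newt`. -/
noncomputable def hat {N : ℕ} (s : ℂ) (U : unitaryGroup (Fin N) ℂ) (k : ℕ) :
    Matrix (Fin N) (Fin N) ℂ :=
  ∑ ij ∈ Finset.HasAntidiagonal.antidiagonal k, newt s (pw U) ij.1 • posPow U ij.2

/-- The `(a, b)` entry of `∑_{j ≥ 1} U ^ j * z ^ j`, as a power series in `z`. -/
noncomputable def posEntry {N : ℕ} (U : unitaryGroup (Fin N) ℂ) (a b : Fin N) : PowerSeries ℂ :=
  PowerSeries.mk fun j => posPow U j a b

lemma hat_apply {N : ℕ} (s : ℂ) (U : unitaryGroup (Fin N) ℂ) (k : ℕ) (a b : Fin N) :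
    hat s U k a b = PowerSeries.coeff k (PowerSeries.mk (newt s (pw U)) * posEntry U a b) := by
  simp [hat, Matrix.sum_apply, PowerSeries.coeff_mul, posEntry]

lemma trace_posPow {N : ℕ} (U : unitaryGroup (Fin N) ℂ) (j : ℕ) :
    trace (posPow U j) = PowerSeries.coeff j (posSeries (pw U)) := by
  simp only [posPow, posSeries, PowerSeries.coeff_mk, pw]
  split_ifs <;> simp

lemma trace_hat {N : ℕ} (s : ℂ) (U : unitaryGroup (Fin N) ℂ) (k : ℕ) :
    s * trace (hat s U k) = k * newt s (pw U) k := by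
  have h := congrArg (PowerSeries.coeff k) (eulerD_newt s (pw U))
  rw [coeff_eulerD, PowerSeries.coeff_mk] at h
  rw [h]
  simp [hat, trace_sum, trace_smul, PowerSeries.coeff_mul, trace_posPow]

lemma newt_rec {s : ℂ} {T : ℕ → ℂ} {k : ℕ} (hk : k ≠ 0) :
    newt s T k = s / k * ∑ ij ∈ Finset.HasAntidiagonal.antidiagonal k,
      newt s T ij.1 * PowerSeries.coeff ij.2 (posSeries T) := by
  have h := congrArg (PowerSeries.coeff k) (eulerD_newt s T)
  rw [coeff_eulerD, PowerSeries.coeff_mk, map_smul, PowerSeries.coeff_mul] at h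
  simp only [PowerSeries.coeff_mk] at h
  have hk' : (k : ℂ) ≠ 0 := by exact_mod_cast hk
  rw [div_mul_eq_mul_div, eq_div_iff hk', mul_comm, h, smul_eq_mul]

/-- The gradient of `newt s (pw U) k`, obtained by differentiating Newton's recursion. -/
lemma hasGrad_newt {N : ℕ} (s : ℂ) (k : ℕ) :
    HasGrad (fun U : unitaryGroup (Fin N) ℂ => newt s (pw U) k) (fun U => s • hat s U k) := by
  induction k using Nat.strong_induction_on with
  | _ k ih =>
    rcases Nat.eq_zero_or_pos k with rfl | hk
    · convert! HasGrad.const (N := N) 1 using 2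
      · simp [newt]
      · simp [hat, posPow]
    have key : ∀ ij ∈ Finset.HasAntidiagonal.antidiagonal k,
        HasGrad (fun U : unitaryGroup (Fin N) ℂ =>
            newt s (pw U) ij.1 * PowerSeries.coeff ij.2 (posSeries (pw U)))
          (fun U => PowerSeries.coeff ij.2 (posSeries (pw U)) • (s • hat s U ij.1)
            + newt s (pw U) ij.1 • ((ij.2 : ℂ) • posPow U ij.2)) := by
      intro ij hij
      have hij' := Finset.HasAntidiagonal.mem_antidiagonal.mp hij
      rcases Nat.eq_zero_or_pos ij.2 with h | h
      · convert! HasGrad.const (N := N) 0 using 2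
        · simp [h, coeff_zero_posSeries]
        · simp [h, coeff_zero_posSeries]
      · have h2 := (ih ij.1 (by omega)).mul (HasGrad.trace_pow (N := N) ij.2)
        convert! h2 using 2
        · simp [posSeries, h.ne', pw]
        · simp [posSeries, h.ne', pw, posPow]
    have h3 := (HasGrad.sum _ key).const_mul (s / k)
    have hk' : (k : ℂ) ≠ 0 := by exact_mod_cast hk.ne'
    convert! h3 using 2 with U U
    · exact newt_rec hk.ne'
    · ext a b
      have h4 := congrArg (PowerSeries.coeff k)
        (eulerD_mul (PowerSeries.mk (newt s (pw U))) (posEntry U a b))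
      rw [coeff_eulerD, eulerD_newt, map_add, ← hat_apply] at h4
      rw [Matrix.smul_apply, Matrix.smul_apply, Matrix.sum_apply, smul_eq_mul, smul_eq_mul,
        div_mul_eq_mul_div, eq_div_iff hk', mul_assoc, mul_comm _ (k : ℂ), h4]
      congr 1
      rw [smul_mul_assoc, mul_right_comm, map_smul, PowerSeries.coeff_mul, PowerSeries.coeff_mul,
        Finset.smul_sum, ← Finset.sum_add_distrib]
      refine Finset.sum_congr rfl fun ij _ => ?_
      simp only [← hat_apply, Matrix.add_apply, Matrix.smul_apply, smul_eq_mul, coeff_eulerD,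
        PowerSeries.coeff_mk]
      simp only [posEntry, PowerSeries.coeff_mk]
      ring


/-! ### Algebraic identities for the combined loop equations -/

lemma posPow_mul {N : ℕ} (U : unitaryGroup (Fin N) ℂ) (i j : ℕ) :
    trace (posPow U i * posPow U j) = if i = 0 ∨ j = 0 then 0 else pw U (i + j) := by
  by_cases hi : i = 0 <;> by_cases hj : j = 0 <;> simp [posPow, hi, hj, pw, pow_add]

/-- The trace of `(∑_{j ≥ 1} U ^ j z ^ j) ^ 2` is `∑_m (m - 1) T_m z ^ m`. -/
lemma sum_posEntry {N : ℕ} (U : unitaryGroup (Fin N) ℂ) :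
    ∑ a, ∑ b, posEntry U a b * posEntry U b a
      = eulerD (posSeries (pw U)) - posSeries (pw U) := by
  ext m
  simp only [map_sum, map_sub, coeff_eulerD, PowerSeries.coeff_mul]
  simp_rw [Finset.sum_comm (t := Finset.HasAntidiagonal.antidiagonal m)]
  have h : ∀ ij ∈ Finset.HasAntidiagonal.antidiagonal m,
      ∑ a, ∑ b, PowerSeries.coeff ij.1 (posEntry U a b) * PowerSeries.coeff ij.2 (posEntry U b a)
        = if ij.1 = 0 ∨ ij.2 = 0 then 0 else pw U m := by
    intro ij hij
    rw [← Finset.HasAntidiagonal.mem_antidiagonal.mp hij, ← posPow_mul]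
    simp [posEntry, trace, mul_apply]
  rw [Finset.sum_congr rfl h, Finset.Nat.sum_antidiagonal_eq_sum_range_succ_mk]
  cases m with
  | zero => simp [posSeries]
  | succ m =>
    rw [Finset.sum_range_succ, Finset.sum_range_succ']
    have h2 : ∀ i ∈ Finset.range m, (if i + 1 = 0 ∨ m + 1 - (i + 1) = 0 then 0 else pw U (m + 1))
        = pw U (m + 1) := by
      intro i hi
      have := Finset.mem_range.mp hi
      rw [if_neg (by omega)]
    rw [Finset.sum_congr rfl h2]
    simp [posSeries]
    ring

/-- The second-order part of the loop equations, combined with weights `newt s`: in terms of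
`C = ∑ newt s k z ^ k` the left-hand side is the coefficient of `D² C + (s N - 1) D C`, where
`D = z d/dz`. The hypothesis `s * s = 1` makes the terms quadratic in the power sums match. -/
lemma div_identity {N : ℕ} {s : ℂ} (hs : s * s = 1) (U : unitaryGroup (Fin N) ℂ) (k : ℕ) :
    ∑ ij ∈ Finset.HasAntidiagonal.antidiagonal k,
      (newt s (pw U) ij.1 * (∑ c ∈ Finset.range ij.2, pw U c * pw U (ij.2 - c))
        + s * trace (hat s U ij.1 * posPow U ij.2))
      = k * (k + s * N - 1) * newt s (pw U) k := by
  set C := PowerSeries.mk (newt s (pw U)) with hC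
  set P := posSeries (pw U) with hP
  have hL : ∀ j, ∑ c ∈ Finset.range j, pw U c * pw U (j - c)
      = PowerSeries.coeff j (((N : ℂ) • (1 : PowerSeries ℂ) + P) * P) := by
    intro j
    rw [PowerSeries.coeff_mul, Finset.Nat.sum_antidiagonal_eq_sum_range_succ_mk,
      Finset.sum_range_succ, Nat.sub_self, hP, coeff_zero_posSeries, mul_zero, add_zero]
    refine Finset.sum_congr rfl fun c hc => ?_
    have := Finset.mem_range.mp hc
    by_cases hc0 : c = 0
    · simp [hc0, posSeries, show j ≠ 0 by omega, pw]
    · simp [hc0, posSeries, show j - c ≠ 0 by omega, PowerSeries.coeff_one]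
  have hH : ∀ i j, trace (hat s U i * posPow U j)
      = ∑ a, ∑ b, PowerSeries.coeff i (C * posEntry U a b) * PowerSeries.coeff j (posEntry U b a) := by
    intro i j
    simp [trace, mul_apply, hat_apply, posEntry, hC]
  have h1 : ∑ ij ∈ Finset.HasAntidiagonal.antidiagonal k,
      (newt s (pw U) ij.1 * (∑ c ∈ Finset.range ij.2, pw U c * pw U (ij.2 - c))
        + s * trace (hat s U ij.1 * posPow U ij.2))
      = PowerSeries.coeff k (C * (((N : ℂ) • (1 : PowerSeries ℂ) + P) * P)
          + s • (C * ∑ a, ∑ b, posEntry U a b * posEntry U b a)) := by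
    rw [Finset.sum_add_distrib, ← Finset.mul_sum, map_add, map_smul, PowerSeries.coeff_mul,
      smul_eq_mul]
    congr 1
    · simp [hL, hC]
    · congr 1
      simp_rw [hH, Finset.mul_sum, map_sum, ← mul_assoc, PowerSeries.coeff_mul _ (_ * _)]
      rw [Finset.sum_comm]
      refine Finset.sum_congr rfl fun a _ => Finset.sum_comm
  have hD : eulerD C = s • (C * P) := eulerD_newt s (pw U)
  have h2 : C * (((N : ℂ) • (1 : PowerSeries ℂ) + P) * P)
          + s • (C * ∑ a, ∑ b, posEntry U a b * posEntry U b a)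
      = eulerD (eulerD C) + (s * N - 1) • eulerD C := by
    rw [sum_posEntry, hD, eulerD_smul, eulerD_mul, hD]
    simp only [← hP, mul_sub, smul_add, smul_sub, smul_smul, one_smul, smul_mul_assoc,
      add_mul, mul_add, one_mul, mul_smul_comm, hs]
    rw [show (s * N - 1) * s = N - s by linear_combination (N : ℂ) * hs, sub_smul, mul_assoc C P P]
    abel
  rw [h1, h2]
  simp only [map_add, map_smul, coeff_eulerD, smul_eq_mul, hC, PowerSeries.coeff_mk]
  ring

lemma hat_zero {N : ℕ} (s : ℂ) (U : unitaryGroup (Fin N) ℂ) : hat s U 0 = 0 := by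
  simp [hat, posPow]

lemma hat_succ {N : ℕ} (s : ℂ) (U : unitaryGroup (Fin N) ℂ) (k : ℕ) :
    hat s U (k + 1) = U.1 * (newt s (pw U) k • 1 + hat s U k) := by
  rw [hat, Finset.Nat.sum_antidiagonal_succ']
  have h0 : posPow U 0 = 0 := by simp [posPow]
  have h1 : ∀ j, posPow U (j + 1) = U.1 * ((if j = 0 then 1 else 0) + posPow U j) := by
    intro j
    rcases Nat.eq_zero_or_pos j with rfl | hj
    · simp [posPow]
    · simp [posPow, hj.ne', pow_succ']
  simp only [h0, smul_zero, zero_add, h1]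
  have h2 : ∑ ij ∈ Finset.HasAntidiagonal.antidiagonal k, newt s (pw U) ij.1 •
      (if ij.2 = 0 then (1 : Matrix (Fin N) (Fin N) ℂ) else 0) = newt s (pw U) k • 1 := by
    rw [Finset.Nat.sum_antidiagonal_eq_sum_range_succ_mk, Finset.sum_range_succ,
      Finset.sum_eq_zero, zero_add]
    · simp
    · intro i hi
      have := Finset.mem_range.mp hi
      simp [show k - i ≠ 0 by omega]
  rw [← h2, hat, ← Finset.sum_add_distrib, Finset.mul_sum]
  simp only [smul_add, mul_add, mul_smul_comm]

lemma commute_hat {N : ℕ} (s : ℂ) (U : unitaryGroup (Fin N) ℂ) (k : ℕ) :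
    Commute U.1 (hat s U k) := by
  refine Commute.sum_right _ _ _ fun ij _ => Commute.smul_right ?_ _
  unfold posPow
  split_ifs
  · exact Commute.zero_right _
  · exact Commute.self_pow _ _

/-- With `Ê = hat (-1)` and `Ĥ = hat 1`, `hat_succ` gives two expressions for the same matrix,
`Ê_{k+1} (h_l + Ĥ_l) = (e'_k + Ê_k) Ĥ_{l+1}`; this is its trace. -/
lemma trace_hat_mul_hat {N : ℕ} (U : unitaryGroup (Fin N) ℂ) (k l : ℕ) :
    trace (hat (-1) U (k + 1) * hat 1 U l) = trace (hat (-1) U k * hat 1 U (l + 1))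
      + (l + 1) * (newt (-1) (pw U) k * newt 1 (pw U) (l + 1))
      + (k + 1) * (newt (-1) (pw U) (k + 1) * newt 1 (pw U) l) := by
  have h1 := trace_hat (-1) U (k + 1)
  have h2 := trace_hat 1 U (l + 1)
  have h3 : hat (-1) U (k + 1) * (newt 1 (pw U) l • 1 + hat 1 U l)
      = (newt (-1) (pw U) k • 1 + hat (-1) U k) * hat 1 U (l + 1) := by
    rw [hat_succ, hat_succ, ← mul_assoc]
    congr 1
    exact (Commute.add_right ((Commute.one_right _).smul_right _) (commute_hat _ U k)).eq
  have h4 := congrArg trace h3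
  simp only [mul_add, add_mul, trace_add, mul_smul_comm, smul_mul_assoc, mul_one, one_mul,
    trace_smul, smul_eq_mul] at h4
  push_cast at h1 h2
  linear_combination h4 + newt 1 (pw U) l * h1 + newt (-1) (pw U) k * h2

lemma trace_conj_posPow {N : ℕ} (U : unitaryGroup (Fin N) ℂ) {j n : ℕ} (hj : j ≤ n) :
    trace ((U.1 ^ n)ᴴ * posPow U j) = if j = 0 then 0 else star (pw U (n - j)) := by
  unfold posPow
  split_ifs with h
  · simp
  · have h1 : (U.1 ^ j)ᴴ * U.1 ^ j = 1 := by
      rw [← star_eq_conjTranspose]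
      exact mem_unitaryGroup_iff'.mp (U ^ j).2
    obtain ⟨m, rfl⟩ := Nat.exists_eq_add_of_le hj
    rw [pow_add, conjTranspose_mul, mul_assoc, h1, mul_one, Nat.add_sub_cancel_left,
      trace_conjTranspose, pw]

/-! ### Computation of the moments -/

section Moments

variable {N : ℕ} (μ : Measure (unitaryGroup (Fin N) ℂ))

/-- `E[e'_k h_l conj T_{k + l}]`, where `e'_k = (-1) ^ k e_k`. -/
noncomputable def mom (k l : ℕ) : ℂ :=
  ∫ U, newt (-1) (pw U) k * newt 1 (pw U) l * star (pw U (k + l)) ∂μ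

/-- `E[tr (Ê_k Ĥ_l) conj T_{k + l}]`, where `Ê = hat (-1)` and `Ĥ = hat 1`. -/
noncomputable def crossMom (k l : ℕ) : ℂ :=
  ∫ U, trace (hat (-1) U k * hat 1 U l) * star (pw U (k + l)) ∂μ

lemma cont_newt (s : ℂ) (k : ℕ) :
    Continuous fun U : unitaryGroup (Fin N) ℂ => newt s (pw U) k := (hasGrad_newt s k).cont

lemma cont_pw (k : ℕ) :
    Continuous fun U : unitaryGroup (Fin N) ℂ => pw U k := (HasGrad.trace_pow k).cont

lemma cont_posPow (k : ℕ) :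
    Continuous fun U : unitaryGroup (Fin N) ℂ => posPow U k := by
  unfold posPow; split_ifs <;> fun_prop

lemma cont_hat (s : ℂ) (k : ℕ) :
    Continuous fun U : unitaryGroup (Fin N) ℂ => hat s U k := by
  have := cont_newt (N := N) s
  have := cont_posPow (N := N)
  unfold hat; fun_prop

/-- The coefficient of `z ^ n` in `M (e' h - 1) - (z d/dz e') h`, which is `∑ T_j z ^ j` as `e' h = 1`. -/
lemma pw_eq_sum (U : unitaryGroup (Fin N) ℂ) {n : ℕ} (hn : 1 ≤ n) (M : ℂ) :
    pw U n = ∑ ij ∈ Finset.HasAntidiagonal.antidiagonal n,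
      (M - ij.1) * (newt (-1) (pw U) ij.1 * newt 1 (pw U) ij.2) := by
  set E := PowerSeries.mk (newt (-1) (pw U)) with hE
  set H := PowerSeries.mk (newt 1 (pw U)) with hH
  have h1 : E * H = 1 := newt_mul_newt (pw U)
  have h2 : posSeries (pw U) = M • (E * H) - M • 1 - eulerD E * H := by
    rw [h1, hE, eulerD_newt, ← hE, neg_smul, one_smul, neg_mul, mul_right_comm, h1]
    simp
  have h3 := congrArg (PowerSeries.coeff n) h2
  simp only [map_sub, map_smul, PowerSeries.coeff_mul, PowerSeries.coeff_one, coeff_eulerD, hE, hH,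
    PowerSeries.coeff_mk, if_neg (show n ≠ 0 by omega), posSeries, smul_eq_mul, mul_zero,
    sub_zero, Finset.mul_sum] at h3
  rw [h3, ← Finset.sum_sub_distrib]
  exact Finset.sum_congr rfl fun ij _ => by ring

lemma sum_anti_succ (f : ℕ → ℂ) (k : ℕ) :
    ∑ ij ∈ Finset.HasAntidiagonal.antidiagonal (k + 1), (if ij.2 = 0 then 0 else f ij.1)
      = f 0 + ∑ i ∈ Finset.range k, f (i + 1) := by
  rw [Finset.Nat.sum_antidiagonal_eq_sum_range_succ_mk, Finset.sum_range_succ]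
  simp only [Nat.sub_self, if_true, add_zero]
  rw [Finset.sum_range_succ', add_comm]
  congr 1
  refine Finset.sum_congr rfl fun i hi => ?_
  have := Finset.mem_range.mp hi
  rw [if_neg (by omega)]

lemma mom_zero_zero [IsProbabilityMeasure μ] : mom μ 0 0 = N := by
  simp [mom, newt, pw]

lemma mom_big {k : ℕ} (l : ℕ) (hk : N < k) : mom μ k l = 0 := by
  have : ∀ U : unitaryGroup (Fin N) ℂ, newt (-1) (pw U) k = 0 := fun U => newt_eq_zero U.1 hk
  simp [mom, this]

lemma crossMom_succ [IsProbabilityMeasure μ] (k l : ℕ) :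
    crossMom μ (k + 1) l = crossMom μ k (l + 1) + (l + 1) * mom μ k (l + 1)
      + (k + 1) * mom μ (k + 1) l := by
  have c1 := cont_newt (N := N)
  have c2 := cont_pw (N := N)
  have c4 := cont_hat (N := N)
  rw [crossMom, crossMom, mom, mom, ← integral_const_mul, ← integral_const_mul,
    ← integral_add (integrable_of_cont μ (by fun_prop)) (integrable_of_cont μ (by fun_prop)),
    ← integral_add (integrable_of_cont μ (by fun_prop)) (integrable_of_cont μ (by fun_prop))]
  congr 1
  funext U
  rw [trace_hat_mul_hat, show k + 1 + l = k + (l + 1) by omega]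
  ring

variable [μ.IsHaarMeasure] [IsProbabilityMeasure μ]

/-- The combination `∑_{i + j = k} newt s i *` (loop equation of index `j`), with the test function
`newt t l * conj T_n`, simplified by `div_identity`. -/
lemma loop_newt {s : ℂ} (hs : s * s = 1) (t : ℂ) (k l n : ℕ) :
    ∫ U, (k * (k + s * N - 1) * (newt s (pw U) k * newt t (pw U) l)
        + t * trace (hat t U l * hat s U k)) * star (pw U n) ∂μ
      = ∑ ij ∈ Finset.HasAntidiagonal.antidiagonal k,
        n * ∫ U, newt s (pw U) ij.1 * newt t (pw U) l * trace ((U.1 ^ n)ᴴ * posPow U ij.2) ∂μ := by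
  have c1 := cont_newt (N := N)
  have c2 := cont_pw (N := N)
  have c3 := cont_posPow (N := N)
  have c4 := cont_hat (N := N)
  have h := fun ij : ℕ × ℕ => loop μ (((hasGrad_newt (N := N) s ij.1).mul (hasGrad_newt t l)).mul
    (HasGrad.trace_pow n).star) ij.2
  have h0 := Finset.sum_eq_zero fun ij (_ : ij ∈ Finset.HasAntidiagonal.antidiagonal k) => h ij
  simp_rw [← integral_const_mul]
  rw [← integral_finsetSum _ fun ij _ => integrable_of_cont μ (by fun_prop)] at h0 ⊢
  rw [← sub_eq_zero, ← integral_sub (integrable_of_cont μ (by fun_prop))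
    (integrable_of_cont μ (by fun_prop)), ← h0]
  congr 1
  funext U
  have hd := div_identity hs U k
  have hk : trace (hat t U l * hat s U k) = ∑ ij ∈ Finset.HasAntidiagonal.antidiagonal k,
      newt s (pw U) ij.1 * trace (hat t U l * posPow U ij.2) := by
    conv_lhs => rw [hat.eq_def s]
    simp [Finset.mul_sum, trace_sum]
  rw [← mul_assoc _ (newt s (pw U) k), ← hd, hk, Finset.sum_mul, Finset.mul_sum, ← Finset.sum_add_distrib,
    Finset.sum_mul, ← Finset.sum_sub_distrib]
  refine Finset.sum_congr rfl fun ij _ => ?_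
  simp only [add_mul, smul_mul_assoc, trace_add, trace_smul, smul_eq_mul, neg_mul, trace_neg,
    conjTranspose_smul, star_natCast, smul_add]
  have e : ∀ j, trace (U.1 ^ j) = pw U j := fun _ => rfl
  simp only [e]
  ring

/-- `loop_newt` for `e'_k` against `h_l conj T_{k + l}`. -/
lemma loop_cross (k l : ℕ) :
    k * (k - N - 1) * mom μ k l + crossMom μ k l
      = (k + l) * ∑ ij ∈ Finset.HasAntidiagonal.antidiagonal k,
          if ij.2 = 0 then 0 else mom μ ij.1 l := by
  have c1 := cont_newt (N := N)
  have c2 := cont_pw (N := N)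
  have c4 := cont_hat (N := N)
  have h := loop_newt μ (s := -1) (by norm_num) 1 k l (k + l)
  rw [← Finset.mul_sum] at h
  rw [mom, crossMom, ← integral_const_mul, ← integral_add (integrable_of_cont μ (by fun_prop))
    (integrable_of_cont μ (by fun_prop))]
  push_cast at h
  convert! h using 1
  · congr 1
    funext U
    rw [trace_mul_comm (hat 1 U l)]
    ring
  · congr 1
    refine Finset.sum_congr rfl fun ij hij => ?_
    have hij' := Finset.HasAntidiagonal.mem_antidiagonal.mp hij
    simp_rw [trace_conj_posPow _ (show ij.2 ≤ k + l by omega)]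
    split_ifs
    · simp
    · rw [show k + l - ij.2 = ij.1 + l by omega, mom]

/-- `loop_newt` for `h_n` against `conj T_n`. -/
lemma loop_h (n : ℕ) :
    n * (n + N - 1) * mom μ 0 n = n * ∑ ij ∈ Finset.HasAntidiagonal.antidiagonal n,
          if ij.2 = 0 then 0 else mom μ 0 ij.1 := by
  have h := loop_newt μ (s := 1) (by norm_num) (-1) n 0 n
  rw [← Finset.mul_sum] at h
  rw [mom, ← integral_const_mul]
  convert! h using 1
  · congr 1
    funext U
    rw [hat_zero]
    simp [newt]
    ring
  · congr 1
    refine Finset.sum_congr rfl fun ij hij => ?_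
    have hij' := Finset.HasAntidiagonal.mem_antidiagonal.mp hij
    simp_rw [trace_conj_posPow _ (show ij.2 ≤ n by omega)]
    split_ifs
    · simp
    · rw [show n - ij.2 = ij.1 by omega, mom]
      simp [newt]

lemma mom_h (hN : 1 ≤ N) (n : ℕ) : mom μ 0 (n + 1) = 1 := by
  induction n using Nat.strong_induction_on with
  | _ n ih =>
    have h := loop_h μ (n + 1)
    rw [sum_anti_succ, mom_zero_zero,
      Finset.sum_congr rfl (fun i hi => ih i (Finset.mem_range.mp hi))] at h
    have h1 : ((n + 1 : ℕ) : ℂ) ≠ 0 := by exact_mod_cast Nat.succ_ne_zero n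
    have h2 : (n : ℂ) + N ≠ 0 := by exact_mod_cast (by omega : n + N ≠ 0)
    rw [mul_assoc] at h
    have h3 := mul_left_cancel₀ h1 h
    apply mul_left_cancel₀ h2
    simp only [Finset.sum_const, Finset.card_range, nsmul_eq_mul] at h3
    push_cast at h3
    linear_combination h3

/-- The value of `crossMom` is carried along because `crossMom_succ` feeds it into the next step of the
induction on `k`. -/
lemma mom_middle (hN : 1 ≤ N) (k l : ℕ) (hk : k + 1 < N) :
    mom μ (k + 1) (l + 1) = 0 ∧ crossMom μ (k + 1) (l + 1) = k + l + 2 := by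
  induction k using Nat.strong_induction_on generalizing l with
  | _ k ih =>
    have h := loop_cross μ (k + 1) (l + 1)
    rw [sum_anti_succ (fun i => mom μ i (l + 1)), mom_h μ hN,
      Finset.sum_congr rfl (fun i hi => (ih i (Finset.mem_range.mp hi) l
        (by have := Finset.mem_range.mp hi; omega)).1)] at h
    have h2 := crossMom_succ μ k (l + 1)
    have h3 : crossMom μ k (l + 1 + 1) + (l + 2) * mom μ k (l + 1 + 1) = k + l + 2 := by
      cases k with
      | zero =>
        rw [mom_h μ hN, crossMom]
        simp [hat_zero]
      | succ k =>
        obtain ⟨h4, h5⟩ := ih k (by omega) (l + 1) (by omega)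
        rw [h4, h5]; push_cast; ring
    -- The coefficient of the unknown moment is `k (k - N)` with index `k + 1` for `k`; it is nonzero as
    -- `k + 1 < N`.
    have h6 : ((k : ℂ) + 1) * ((k + 1) - N) ≠ 0 := by
      apply mul_ne_zero
      · exact_mod_cast Nat.succ_ne_zero k
      · rw [sub_ne_zero]; exact_mod_cast (by omega : k + 1 ≠ N)
    push_cast at h h2
    simp only [Finset.sum_const_zero] at h
    have h7 : mom μ (k + 1) (l + 1) = 0 := by
      apply mul_left_cancel₀ h6
      linear_combination h - h2 - h3
    refine ⟨h7, ?_⟩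
    rw [h7] at h
    linear_combination h

lemma second_moment_complex (n : ℕ) (hn : 1 ≤ n) (hN : 1 ≤ N) :
    ∫ U : unitaryGroup (Fin N) ℂ, pw U n * star (pw U n) ∂μ = (min n N : ℕ) := by
  have c1 := cont_newt (N := N)
  have c2 := cont_pw (N := N)
  set M := min n N with hM
  have h1 : ∀ U : unitaryGroup (Fin N) ℂ, pw U n * star (pw U n)
      = ∑ ij ∈ Finset.HasAntidiagonal.antidiagonal n,
      ((M : ℂ) - ij.1) * (newt (-1) (pw U) ij.1 * newt 1 (pw U) ij.2 * star (pw U (ij.1 + ij.2))) := by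
    intro U
    conv_lhs => enter [1]; rw [pw_eq_sum U hn M]
    rw [Finset.sum_mul]
    refine Finset.sum_congr rfl fun ij hij => ?_
    rw [Finset.HasAntidiagonal.mem_antidiagonal.mp hij]
    ring
  simp_rw [h1]
  rw [integral_finsetSum _ fun ij _ => integrable_of_cont μ (by fun_prop)]
  simp_rw [integral_const_mul]
  rw [Finset.sum_eq_single (0, n)]
  · have := mom_h μ hN (n - 1)
    rw [Nat.sub_add_cancel hn] at this
    change ((M : ℂ) - ((0 : ℕ) : ℂ)) * mom μ 0 n = M
    rw [this]; simp
  · rintro ⟨i, j⟩ hij hne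
    have hij' : i + j = n := Finset.HasAntidiagonal.mem_antidiagonal.mp hij
    change ((M : ℂ) - i) * mom μ i j = 0
    have hi : i ≠ 0 := by
      rintro rfl
      exact hne (by simp at hij'; simp [hij'])
    rcases lt_trichotomy i M with h | h | h
    · obtain ⟨k, rfl⟩ := Nat.exists_eq_succ_of_ne_zero hi
      obtain ⟨l, rfl⟩ := Nat.exists_eq_succ_of_ne_zero (show j ≠ 0 by omega)
      rw [(mom_middle μ hN k l (by omega)).1, mul_zero]
    · simp [h]
    · rw [mom_big μ j (by omega), mul_zero]
  · intro h
    exact absurd (Finset.HasAntidiagonal.mem_antidiagonal.mpr (by simp)) h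

end Moments

/-- Diaconis–Shahshahani second moment: for `n, N ≥ 1`, the integral of
`|tr(Uⁿ)|²` over the unitary group `U(N)` with respect to Haar probability
measure equals `min(n, N)`; in particular it equals `N` for `n ≥ N`. -/
theorem second_moment_trace_power (n N : ℕ) (hn : 1 ≤ n) (hN : 1 ≤ N)
    (μ : Measure (unitaryGroup (Fin N) ℂ)) [μ.IsHaarMeasure] [IsProbabilityMeasure μ] :
    ∫ U : unitaryGroup (Fin N) ℂ,
        ‖trace ((U : Matrix (Fin N) (Fin N) ℂ) ^ n)‖ ^ 2 ∂μ = min n N := by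
  have h := second_moment_complex μ n hn hN
  have h1 : ∀ U : unitaryGroup (Fin N) ℂ, pw U n * star (pw U n)
      = ((‖trace (U.1 ^ n)‖ ^ 2 : ℝ) : ℂ) := by
    intro U
    rw [pw, ← starRingEnd_apply, Complex.mul_conj']
    push_cast; rfl
  simp_rw [h1] at h
  have h2 := Complex.ofReal_injective
    ((integral_complex_ofReal.symm.trans h).trans (Complex.ofReal_natCast _).symm)
  rw [h2]
end
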